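/- Let γ ∈ (0,1) and β ≥ 3, and let ρ ∈ (0,1) be the unique solution of 1 − ρ = e^{−βρ}. Then I(β) = ∫_0^1 x^{−2γ} (1−ρ)^{(1/(1−γ) − 1 + γ)·x^{−γ}} dx < 1. -/

import Mathlib

noncomputable section

/-- `I = ∫_0^1 x^{−2γ} (1−ρ)^{(1/(1−γ) − 1 + γ)·x^{−γ}} dx`. -/
def snrIntegral (γ ρ : ℝ) : ℝ :=
  ∫ x in Set.Ioc (0 : ℝ) 1,
    x ^ (-(2 * γ)) * (1 - ρ) ^ ((1 / (1 - γ) - 1 + γ) * x ^ (-γ))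

/-- For `γ ∈ (0,1)`, `β ≥ 3` and `ρ ∈ (0,1)` the unique solution of
`1 − ρ = e^{−βρ}`, the integral `I(β)` is less than `1`. -/
theorem snrIntegral_lt_one_of_three_le
    (γ β ρ : ℝ) (hγ : γ ∈ Set.Ioo (0 : ℝ) 1) (hβ : 3 ≤ β)
    (hρ : ρ ∈ Set.Ioo (0 : ℝ) 1) (hfix : 1 - ρ = Real.exp (-(β * ρ))) :
    snrIntegral γ ρ < 1 := by
  obtain ⟨hg0, hg1⟩ := hγ
  obtain ⟨hr0, hr1⟩ := hρ
  obtain ⟨L, hL⟩ : ∃ L, L = β * ρ := ⟨_, rfl⟩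
  rw [← hL] at hfix
  have hL3 : 3 * ρ ≤ L := by rw [hL]; gcongr
  have hL0 : 0 < L := by linarith
  have hL2 : 2 ≤ L := by
    by_contra! h
    have h1 := Real.quadratic_le_exp_of_nonneg hL0.le
    have h2 : Real.exp L * (1 - ρ) = 1 := by
      rw [hfix, ← Real.exp_add]; simp
    have h3 : Real.exp L * (1 - L / 3) ≤ 1 := by
      rw [← h2]; exact mul_le_mul_of_nonneg_left (by linarith) (Real.exp_pos _).le
    have h4 : (1 + L + L ^ 2 / 2) * (1 - L / 3) ≤ 1 :=
      le_trans (mul_le_mul_of_nonneg_right h1 (by linarith)) h3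
    nlinarith [mul_pos hL0 hL0, mul_pos hL0 (sub_pos.2 h), mul_pos (mul_pos hL0 hL0) (sub_pos.2 h)]
  obtain ⟨c, hc⟩ : ∃ c, c = 1 / (1 - γ) - 1 + γ := ⟨_, rfl⟩
  have h1g : 0 < 1 - γ := by linarith
  have hc1 : c * (1 - γ) = γ * (2 - γ) := by rw [hc]; field_simp; ring
  have hc0 : 0 < c := by
    by_contra! h
    nlinarith [mul_pos hg0 (show 0 < 2 - γ by linarith)]
  obtain ⟨a, ha⟩ : ∃ a, a = c * L := ⟨_, rfl⟩
  have ha0 : 0 < a := by rw [ha]; positivity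
  have ha1 : 2 * γ < a * (1 - γ) := by
    have : a * (1 - γ) = γ * (2 - γ) * L := by rw [ha, ← hc1]; ring
    rw [this]
    have : γ * (2 - γ) * 2 ≤ γ * (2 - γ) * L := by
      apply mul_le_mul_of_nonneg_left hL2
      exact mul_nonneg hg0.le (by linarith)
    nlinarith
  have ha2 : 2 * γ < a := by nlinarith
  have hp : -1 < γ * (a - 2) := by
    nlinarith [sq_nonneg (2 * γ - 1), mul_pos hg0 (sub_pos.2 ha2)]
  have hint : MeasureTheory.IntegrableOn
      (fun x : ℝ => Real.exp (-a) * x ^ (γ * (a - 2))) (Set.Ioc 0 1) := by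
    have := (intervalIntegral.intervalIntegrable_rpow' (a := 0) (b := 1) hp).const_mul
      (Real.exp (-a))
    exact (intervalIntegrable_iff_integrableOn_Ioc_of_le zero_le_one).1 this
  have hval : ∫ x in Set.Ioc (0 : ℝ) 1, Real.exp (-a) * x ^ (γ * (a - 2))
      = Real.exp (-a) / (γ * (a - 2) + 1) := by
    rw [← intervalIntegral.integral_of_le zero_le_one, intervalIntegral.integral_const_mul,
      integral_rpow (Or.inl hp), Real.one_rpow, Real.zero_rpow (by linarith)]
    ring
  have hle : snrIntegral γ ρ ≤ ∫ x in Set.Ioc (0 : ℝ) 1, Real.exp (-a) * x ^ (γ * (a - 2)) := by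
    unfold snrIntegral
    apply MeasureTheory.integral_mono_of_nonneg
    · filter_upwards [MeasureTheory.ae_restrict_mem measurableSet_Ioc] with x hx
      have := hx.1
      have : 0 < 1 - ρ := by linarith
      simp only [Pi.zero_apply]
      positivity
    · exact hint
    · filter_upwards [MeasureTheory.ae_restrict_mem measurableSet_Ioc] with x hx
      have hx0 := hx.1
      rw [← hc, hfix, ← Real.exp_mul, Real.rpow_def_of_pos hx0, Real.rpow_def_of_pos hx0,
        Real.rpow_def_of_pos hx0, ← Real.exp_add, ← Real.exp_add]
      apply Real.exp_le_exp.2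
      have h := Real.add_one_le_exp (Real.log x * -γ)
      have h' := mul_le_mul_of_nonneg_left h ha0.le
      have e : -L * (c * Real.exp (Real.log x * -γ)) = -(a * Real.exp (Real.log x * -γ)) := by
        rw [ha]; ring
      rw [e]
      linarith
  refine hle.trans_lt ?_
  rw [hval, div_lt_one (by linarith)]
  have hD : 0 < γ * (a - 2) + 1 := by linarith
  have h5 : 1 < Real.exp a * (γ * (a - 2) + 1) := by
    have h6 := mul_le_mul_of_nonneg_right (Real.add_one_le_exp a) hD.le
    nlinarith [mul_pos hg0 (mul_pos ha0 ha0)]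
  calc Real.exp (-a) = Real.exp (-a) * 1 := by ring
    _ < Real.exp (-a) * (Real.exp a * (γ * (a - 2) + 1)) :=
        mul_lt_mul_of_pos_left h5 (Real.exp_pos _)
    _ = γ * (a - 2) + 1 := by rw [← mul_assoc, ← Real.exp_add]; simp
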